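/- Let α ∈ (0,1) be irrational with continued fraction convergents p_k/q_k and partial quotients a_k, let τ > 0, τ₁ = 2/τ + 6, E = {k ∈ ℕ : k > 1 and q_{k+1} > q_k^{1/τ+3}}, and M = ⋃_{k∈E} {±m q_k : m = 1,…,a_k}, and assume M is infinite. Let (ĥ(m))_{m∈ℤ} be complex numbers with |ĥ(m)| ≤ C|m|^{−τ₁} for all m ≠ 0, set h₁(x) = ∑_{m∈M∪{0}} ĥ(m) e(mx) and H_n(x) = ∑_{i=0}^{n−1} h₁(x+iα). Then there is a constant C′ > 0 such that for every t ∈ E, max_{x∈ℝ/ℤ} |H_{q_t}(x) − q_t ĥ(0)| ≤ C′ q_t^{−(1/τ+2)}. -/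

import Mathlib

open MeasureTheory Filter Real

/-!
Write `S_Q(m) = ∑_{i<Q} e(miα)`, so that `H_Q(x) - Q ĥ(0) = ∑_{m≠0} ĥ(m) e(mx) S_Q(m)`. If `p/Q`
is a reduced fraction and `|Qα - p| ≤ Q^{-σ}` with `σ ≥ 1`, then `|S_Q(m)| ≤ 2π |m|^σ Q^{1-σ}` for
every `m ≠ 0`: when `0 < |m| < Q` the sum vanishes on replacing `α` by `p/Q`, and the error made in
doing so is at most `2π |m| Q |Qα - p|`; when `|m| ≥ Q` the trivial bound `Q ≤ |m|^σ Q^{1-σ}` is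
enough. A decay `ĥ(m) = O(|m|^{-s})` with `s > σ + 1` makes the resulting series converge. Since
`|q_t α - p_t| ≤ 1 / q_{t+1}`, a gap `q_t^σ ≤ q_{t+1}` provides such a fraction with `Q = q_t`.
-/

section Fourier

variable {T : ℝ} (m : ℤ) (x y : AddCircle T)

lemma norm_fourier_apply : ‖fourier m x‖ = 1 :=
  Circle.norm_coe _

lemma fourier_apply_add : fourier m (x + y) = fourier m x * fourier m y := by
  simp only [fourier_apply, smul_add, AddCircle.toCircle_add, Circle.coe_mul]

lemma fourier_apply_nsmul (n : ℕ) : fourier m (n • x) = fourier m x ^ n := by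
  rw [fourier_apply, smul_comm, AddCircle.toCircle_nsmul, Circle.coe_pow, fourier_apply]

lemma fourier_apply_eq_one_iff (hT : T ≠ 0) : fourier m x = 1 ↔ m • x = 0 := by
  rw [fourier_apply, Circle.coe_eq_one, ← AddCircle.toCircle_zero,
    (AddCircle.injective_toCircle hT).eq_iff]

lemma norm_fourier_coe_sub_le (m : ℤ) (x y : ℝ) :
    ‖fourier m (x : UnitAddCircle) - fourier m (y : UnitAddCircle)‖ ≤
      2 * π * |(m : ℝ)| * |x - y| := by
  have fourier_sub : fourier m ((x - y : ℝ) : UnitAddCircle) =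
      Complex.exp (Complex.I * (2 * π * m * (x - y) : ℝ)) := by
    rw [fourier_coe_apply]
    congr 1
    push_cast
    ring
  calc ‖fourier m (x : UnitAddCircle) - fourier m (y : UnitAddCircle)‖
      = ‖fourier m ((x - y : ℝ) : UnitAddCircle) - 1‖ := by
        rw [← sub_add_cancel x y, AddCircle.coe_add, fourier_apply_add, ← sub_one_mul, norm_mul,
          norm_fourier_apply, mul_one, add_sub_cancel_right]
    _ ≤ |2 * π * m * (x - y)| := fourier_sub ▸ norm_exp_I_mul_ofReal_sub_one_le
    _ = 2 * π * |(m : ℝ)| * |x - y| := by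
        rw [abs_mul, abs_mul, abs_of_pos two_pi_pos]

end Fourier

/-- The exponential sum `∑_{i<n} e(miα)` of frequency `m` along the rotation by `α`. -/
noncomputable def weylSum (α : ℝ) (n : ℕ) (m : ℤ) : ℂ :=
  ∑ i ∈ Finset.range n, fourier m ((i * α : ℝ) : UnitAddCircle)

section WeylSum

variable {α σ : ℝ} {Q : ℕ} {p m : ℤ}

lemma weylSum_zero_right (α : ℝ) (n : ℕ) : weylSum α n 0 = n := by
  simp only [weylSum, fourier_zero, Finset.sum_const, Finset.card_range, nsmul_eq_mul, mul_one]

lemma norm_weylSum_le (α : ℝ) (n : ℕ) (m : ℤ) : ‖weylSum α n m‖ ≤ n :=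
  (norm_sum_le_of_le _ fun _ _ ↦ (norm_fourier_apply m _).le).trans_eq (by simp)

lemma weylSum_div_eq_zero (hp : IsCoprime p (Q : ℤ)) (hm : ¬ (Q : ℤ) ∣ m) :
    weylSum (p / Q) Q m = 0 := by
  rcases Q.eq_zero_or_pos with rfl | hQ
  · simp [weylSum]
  set u : UnitAddCircle := ((p / Q : ℝ) : UnitAddCircle)
  have order_u : addOrderOf u = Q := by
    simpa only [mul_one] using AddCircle.addOrderOf_div_of_gcd_eq_one' (p := (1 : ℝ)) hQ
      (Int.isCoprime_iff_gcd_eq_one.1 hp)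
  have root_ne_one : fourier m u ≠ 1 := by
    rwa [Ne, fourier_apply_eq_one_iff m u one_ne_zero, ← addOrderOf_dvd_iff_zsmul_eq_zero, order_u]
  have root_pow : fourier m u ^ Q = 1 := by
    rw [← fourier_apply_nsmul, ← order_u, addOrderOf_nsmul_eq_zero, fourier_eval_zero]
  have geometric : weylSum (p / Q) Q m = ∑ i ∈ Finset.range Q, fourier m u ^ i :=
    Finset.sum_congr rfl fun i _ ↦ by
      rw [← fourier_apply_nsmul, ← AddCircle.coe_nsmul, nsmul_eq_mul]
  rw [geometric, geom_sum_eq root_ne_one, root_pow, sub_self, zero_div]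

lemma norm_weylSum_sub_le (α β : ℝ) (n : ℕ) (m : ℤ) :
    ‖weylSum α n m - weylSum β n m‖ ≤ 2 * π * |(m : ℝ)| * n ^ 2 * |α - β| := by
  have term_le : ∀ i ∈ Finset.range n,
      ‖fourier m ((i * α : ℝ) : UnitAddCircle) - fourier m ((i * β : ℝ) : UnitAddCircle)‖ ≤
        2 * π * |(m : ℝ)| * (n * |α - β|) := fun i hi ↦ by
    have hin : (i : ℝ) ≤ n := by exact_mod_cast (Finset.mem_range.1 hi).le
    refine (norm_fourier_coe_sub_le m _ _).trans ?_
    rw [← mul_sub, abs_mul, Nat.abs_cast]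
    gcongr
  rw [weylSum, weylSum, ← Finset.sum_sub_distrib]
  refine (norm_sum_le_of_le _ term_le).trans_eq ?_
  rw [Finset.sum_const, Finset.card_range, nsmul_eq_mul]
  ring

lemma norm_weylSum_le_of_not_dvd (α : ℝ) (hp : IsCoprime p (Q : ℤ)) (hm : ¬ (Q : ℤ) ∣ m) :
    ‖weylSum α Q m‖ ≤ 2 * π * |(m : ℝ)| * Q * |Q * α - p| := by
  rcases Q.eq_zero_or_pos with rfl | hQ
  · simp [weylSum]
  have hQ₀ : (Q : ℝ) ≠ 0 := by positivity
  calc ‖weylSum α Q m‖ = ‖weylSum α Q m - weylSum (p / Q) Q m‖ := by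
        rw [weylSum_div_eq_zero hp hm, sub_zero]
    _ ≤ 2 * π * |(m : ℝ)| * Q ^ 2 * |α - p / Q| := norm_weylSum_sub_le _ _ _ _
    _ = 2 * π * |(m : ℝ)| * Q * |Q * (α - p / Q)| := by
        rw [abs_mul, Nat.abs_cast]
        ring
    _ = 2 * π * |(m : ℝ)| * Q * |Q * α - p| := by
        rw [mul_sub, mul_div_cancel₀ _ hQ₀]

lemma norm_weylSum_le_rpow (hσ : 1 ≤ σ) (hQ : 0 < Q) (hp : IsCoprime p (Q : ℤ))
    (hα : |Q * α - p| ≤ (Q : ℝ) ^ (-σ)) (hm : m ≠ 0) :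
    ‖weylSum α Q m‖ ≤ 2 * π * |(m : ℝ)| ^ σ * (Q : ℝ) ^ (1 - σ) := by
  have hQ₀ : (0 : ℝ) < Q := by exact_mod_cast hQ
  have one_le_abs : (1 : ℝ) ≤ |(m : ℝ)| := by exact_mod_cast Int.one_le_abs hm
  rcases lt_or_ge |m| (Q : ℤ) with hmQ | hQm
  · have not_dvd : ¬ (Q : ℤ) ∣ m := fun h ↦ hm (Int.eq_zero_of_abs_lt_dvd h hmQ)
    calc ‖weylSum α Q m‖ ≤ 2 * π * |(m : ℝ)| * Q * |Q * α - p| :=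
          norm_weylSum_le_of_not_dvd α hp not_dvd
      _ ≤ 2 * π * |(m : ℝ)| ^ σ * Q * (Q : ℝ) ^ (-σ) := by
          gcongr
          exact self_le_rpow_of_one_le one_le_abs hσ
      _ = 2 * π * |(m : ℝ)| ^ σ * (Q : ℝ) ^ (1 - σ) := by
          rw [mul_assoc, sub_eq_add_neg, rpow_add hQ₀, rpow_one]
  · have le_abs : (Q : ℝ) ≤ |(m : ℝ)| := by exact_mod_cast hQm
    calc ‖weylSum α Q m‖ ≤ Q := norm_weylSum_le α Q m
      _ = 1 * (Q : ℝ) ^ σ * (Q : ℝ) ^ (1 - σ) := by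
          rw [one_mul, ← rpow_add hQ₀, add_sub_cancel, rpow_one]
      _ ≤ 2 * π * |(m : ℝ)| ^ σ * (Q : ℝ) ^ (1 - σ) := by
          gcongr
          linarith [pi_gt_three]

end WeylSum

section BirkhoffSum

lemma summable_norm_of_norm_le_rpow {E : Type*} [SeminormedAddCommGroup E] {c : ℤ → E}
    {C s : ℝ} (hs : 1 < s) (hc : ∀ m : ℤ, m ≠ 0 → ‖c m‖ ≤ C * |(m : ℝ)| ^ (-s)) :
    Summable fun m ↦ ‖c m‖ := by
  refine .of_norm_bounded_eventually ((summable_abs_int_rpow hs).mul_left C) ?_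
  filter_upwards [(Set.finite_singleton (0 : ℤ)).compl_mem_cofinite] with m hm
  simpa only [norm_norm] using hc m hm

variable {α σ s C : ℝ} {c : ℤ → ℂ} {Q : ℕ} {p : ℤ}

lemma hasSum_mul_weylSum (hc : Summable fun m ↦ ‖c m‖) (α : ℝ) (n : ℕ) (x : UnitAddCircle) :
    HasSum (fun m ↦ c m * fourier m x * weylSum α n m)
      (∑ i ∈ Finset.range n, ∑' m, c m * fourier m (x + ((i * α : ℝ) : UnitAddCircle))) := by
  have summable (y : UnitAddCircle) : Summable fun m ↦ c m * fourier m y :=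
    .of_norm (by simpa only [norm_mul, norm_fourier_apply, mul_one] using hc)
  simpa only [weylSum, Finset.mul_sum, mul_assoc, ← fourier_apply_add] using
    hasSum_sum fun i (_ : i ∈ Finset.range n) ↦
      (summable (x + ((i * α : ℝ) : UnitAddCircle))).hasSum

theorem norm_sum_tsum_fourier_sub_le (hσ : 1 ≤ σ) (hs : σ + 1 < s)
    (hc : ∀ m : ℤ, m ≠ 0 → ‖c m‖ ≤ C * |(m : ℝ)| ^ (-s)) (hQ : 0 < Q) (hp : IsCoprime p (Q : ℤ))
    (hα : |Q * α - p| ≤ (Q : ℝ) ^ (-σ)) (x : UnitAddCircle) :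
    ‖∑ i ∈ Finset.range Q, ∑' m, c m * fourier m (x + ((i * α : ℝ) : UnitAddCircle)) - Q * c 0‖ ≤
      2 * π * C * (∑' m : ℤ, |(m : ℝ)| ^ (-(s - σ))) * (Q : ℝ) ^ (1 - σ) := by
  have hC : 0 ≤ C := by simpa using (norm_nonneg _).trans (hc 1 one_ne_zero)
  have weylSum_series := (hasSum_mul_weylSum
    (summable_norm_of_norm_le_rpow (by linarith) hc) α Q x).sub (hasSum_ite_eq 0 (Q * c 0))
  have majorant := ((summable_abs_int_rpow (by linarith : 1 < s - σ)).hasSum.mul_left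
    (2 * π * C)).mul_right ((Q : ℝ) ^ (1 - σ))
  refine weylSum_series.norm_le_of_bounded majorant fun m ↦ ?_
  rcases eq_or_ne m 0 with rfl | hm
  · rw [if_pos rfl, fourier_zero, weylSum_zero_right, mul_one, mul_comm, sub_self, norm_zero]
    positivity
  have abs_m_pos : (0 : ℝ) < |(m : ℝ)| := by positivity
  calc ‖c m * fourier m x * weylSum α Q m - if m = 0 then Q * c 0 else 0‖
      = ‖c m‖ * ‖weylSum α Q m‖ := by
        rw [if_neg hm, sub_zero, norm_mul, norm_mul, norm_fourier_apply, mul_one]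
    _ ≤ C * |(m : ℝ)| ^ (-s) * (2 * π * |(m : ℝ)| ^ σ * (Q : ℝ) ^ (1 - σ)) :=
        mul_le_mul (hc m hm) (norm_weylSum_le_rpow hσ hQ hp hα hm) (norm_nonneg _) (by positivity)
    _ = 2 * π * C * |(m : ℝ)| ^ (-(s - σ)) * (Q : ℝ) ^ (1 - σ) := by
        rw [neg_sub, ← neg_add_eq_sub s σ, rpow_add abs_m_pos]
        ring

end BirkhoffSum

section Convergents

variable {K : Type*} [Field K] [LinearOrder K] [FloorRing K]

lemma exists_int_contsAux_of_eq (v : K) (n : ℕ) :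
    ∃ p r : ℤ, (GenContFract.of v).contsAux n = ⟨(p : K), (r : K)⟩ := by
  induction n using Nat.twoStepInduction with
  | zero => exact ⟨1, 0, by simp [GenContFract.zeroth_contAux_eq_one_zero]⟩
  | one => exact ⟨⌊v⌋, 1, by
      simp [GenContFract.first_contAux_eq_h_one, GenContFract.of_h_eq_floor]⟩
  | more n ih₀ ih₁ =>
    obtain ⟨p₀, r₀, h₀⟩ := ih₀
    obtain ⟨p₁, r₁, h₁⟩ := ih₁
    rcases h : (GenContFract.of v).s.get? n with _ | gp
    · exact ⟨p₁, r₁, (GenContFract.contsAux_stable_step_of_terminated h).trans h₁⟩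
    · obtain ⟨ha, z, hb⟩ := GenContFract.of_partNum_eq_one_and_exists_int_partDen_eq h
      refine ⟨z * p₁ + p₀, z * r₁ + r₀, ?_⟩
      rw [GenContFract.contsAux_recurrence h h₀ h₁, ha, hb]
      push_cast
      rw [one_mul, one_mul]

lemma exists_isCoprime_nums_dens_of {v : K} {n : ℕ}
    (hn : ¬ (GenContFract.of v).TerminatedAt n) :
    ∃ p r : ℤ, (GenContFract.of v).nums n = p ∧ (GenContFract.of v).dens n = r ∧ IsCoprime p r := by
  obtain ⟨p, r, hpr⟩ := exists_int_contsAux_of_eq v (n + 1)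
  obtain ⟨p', r', hpr'⟩ := exists_int_contsAux_of_eq v (n + 2)
  have num_eq : (GenContFract.of v).nums n = p := congrArg GenContFract.Pair.a hpr
  have den_eq : (GenContFract.of v).dens n = r := congrArg GenContFract.Pair.b hpr
  have num_succ_eq : (GenContFract.of v).nums (n + 1) = p' := congrArg GenContFract.Pair.a hpr'
  have den_succ_eq : (GenContFract.of v).dens (n + 1) = r' := congrArg GenContFract.Pair.b hpr'
  have determinant : p * r' - r * p' = (-1) ^ (n + 1) := by
    have det : (GenContFract.of v).nums n * (GenContFract.of v).dens (n + 1) -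
        (GenContFract.of v).dens n * (GenContFract.of v).nums (n + 1) = (-1) ^ (n + 1) :=
      SimpContFract.determinant (s := SimpContFract.of v) hn
    rw [num_eq, den_eq, num_succ_eq, den_succ_eq] at det
    exact_mod_cast det
  have sign_mul_self : (-1 : ℤ) ^ (n + 1) * (-1) ^ (n + 1) = 1 :=
    pow_mul_pow_eq_one _ (by norm_num)
  exact ⟨p, r, num_eq, den_eq, (-1) ^ (n + 1) * r', -(-1) ^ (n + 1) * p', by
    linear_combination (-1) ^ (n + 1) * determinant + sign_mul_self⟩

variable [IsStrictOrderedRing K]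

lemma one_le_dens_of {v : K} {n : ℕ} (hn : ¬ (GenContFract.of v).TerminatedAt n) :
    1 ≤ (GenContFract.of v).dens n := by
  have fib_le : (Nat.fib (n + 1) : K) ≤ (GenContFract.of v).dens n :=
    GenContFract.succ_nth_fib_le_of_nth_den
      (.inr fun h ↦ hn (GenContFract.terminated_stable n.pred_le h))
  exact le_trans (by exact_mod_cast Nat.fib_pos.2 n.succ_pos) fib_le

lemma exists_isCoprime_abs_dens_mul_sub_le {v : K} {n : ℕ}
    (hn : ¬ (GenContFract.of v).TerminatedAt n) {Q : ℕ} (hQ : (GenContFract.of v).dens n = Q) :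
    ∃ p : ℤ, IsCoprime p (Q : ℤ) ∧ |Q * v - p| ≤ 1 / (GenContFract.of v).dens (n + 1) := by
  obtain ⟨p, r, num_eq, den_eq, hpr⟩ := exists_isCoprime_nums_dens_of hn
  obtain rfl : r = Q := by exact_mod_cast den_eq.symm.trans hQ
  have hQ₀ : (0 : K) < Q := hQ ▸ zero_lt_one.trans_le (one_le_dens_of hn)
  refine ⟨p, hpr, ?_⟩
  calc |Q * v - p| = Q * |v - (GenContFract.of v).convs n| := by
        rw [GenContFract.conv_eq_num_div_den, num_eq, hQ, ← abs_of_pos hQ₀, ← abs_mul,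
          abs_of_pos hQ₀, mul_sub, mul_div_cancel₀ _ hQ₀.ne']
    _ ≤ Q * (1 / (Q * (GenContFract.of v).dens (n + 1))) := by
        gcongr
        simpa only [hQ] using GenContFract.abs_sub_convs_le hn
    _ = 1 / (GenContFract.of v).dens (n + 1) := by
        field_simp

end Convergents

lemma not_terminatedAt_of_irrational {α : ℝ} (hα : Irrational α) (n : ℕ) :
    ¬ (GenContFract.of α).TerminatedAt n := fun h ↦ by
  obtain ⟨r, hr⟩ := (GenContFract.terminates_iff_rat α).1 ⟨n, h⟩
  exact hα ⟨r, hr.symm⟩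

/-- `β` is an orbit of the Gauss map `y ↦ 1/y - ⌊1/y⌋` and `a` records the integer parts, both
indexed from `1` (their values at `0` are irrelevant); for `β 1 ∈ (0, 1)`, the `a k` are the partial
quotients of `β 1`. -/
def IsGaussOrbit (β : ℕ → ℝ) (a : ℕ → ℕ) : Prop :=
  ∀ k : ℕ, 1 ≤ k → (a k : ℤ) = ⌊1 / β k⌋ ∧ β (k + 1) = 1 / β k - a k

namespace IsGaussOrbit

variable {β : ℕ → ℝ} {a : ℕ → ℕ}

lemma floor_inv (h : IsGaussOrbit β a) (n : ℕ) : ⌊(β (n + 1))⁻¹⌋ = a (n + 1) := by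
  rw [← one_div, (h (n + 1) n.succ_pos).1]

lemma fract_inv (h : IsGaussOrbit β a) (n : ℕ) : Int.fract (β (n + 1))⁻¹ = β (n + 2) := by
  rw [Int.fract, h.floor_inv, (h (n + 1) n.succ_pos).2, one_div, Int.cast_natCast]

lemma irrational (h : IsGaussOrbit β a) (hβ : Irrational (β 1)) (n : ℕ) :
    Irrational (β (n + 1)) := by
  induction n with
  | zero => exact hβ
  | succ n ih =>
    rw [(h (n + 1) n.succ_pos).2, one_div]
    exact ih.inv.sub_natCast _

lemma exists_stream_eq (h : IsGaussOrbit β a) (hβ : Irrational (β 1)) (hβ₁ : β 1 ∈ Set.Ioo 0 1)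
    (n : ℕ) : ∃ b, GenContFract.IntFractPair.stream (β 1) n = some ⟨b, β (n + 1)⟩ := by
  induction n with
  | zero => exact ⟨⌊β 1⌋, by
      rw [GenContFract.IntFractPair.stream_zero, GenContFract.IntFractPair.of,
        Int.fract_eq_self.2 ⟨hβ₁.1.le, hβ₁.2⟩]⟩
  | succ n ih =>
    obtain ⟨b, hb⟩ := ih
    exact ⟨⌊(β (n + 1))⁻¹⌋, by
      rw [GenContFract.IntFractPair.stream_succ_of_some hb (h.irrational hβ n).ne_zero,
        GenContFract.IntFractPair.of, h.fract_inv]⟩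

lemma get?_of_s (h : IsGaussOrbit β a) (hβ : Irrational (β 1)) (hβ₁ : β 1 ∈ Set.Ioo 0 1) (n : ℕ) :
    (GenContFract.of (β 1)).s.get? n = some ⟨1, a (n + 1)⟩ := by
  obtain ⟨b, hb⟩ := h.exists_stream_eq hβ hβ₁ n
  rw [GenContFract.get?_of_eq_some_of_get?_intFractPair_stream_fr_ne_zero hb
    (h.irrational hβ n).ne_zero, GenContFract.IntFractPair.of, h.floor_inv, Int.cast_natCast]

lemma dens_of_eq (h : IsGaussOrbit β a) (hβ : Irrational (β 1)) (hβ₁ : β 1 ∈ Set.Ioo 0 1)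
    {q : ℕ → ℕ} (hq1 : q 1 = 1) (hq2 : q 2 = a 1)
    (hqrec : ∀ k : ℕ, 2 ≤ k → q (k + 1) = a k * q k + q (k - 1)) (n : ℕ) :
    (GenContFract.of (β 1)).dens n = q (n + 1) := by
  induction n using Nat.twoStepInduction with
  | zero => rw [GenContFract.zeroth_den_eq_one, hq1, Nat.cast_one]
  | one => rw [GenContFract.first_den_eq (h.get?_of_s hβ hβ₁ 0), hq2]
  | more n ih₀ ih₁ =>
    rw [GenContFract.dens_recurrence (h.get?_of_s hβ hβ₁ (n + 1)) ih₀ ih₁, hqrec (n + 2) (by omega)]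
    push_cast
    rw [one_mul]

end IsGaussOrbit

theorem birkhoff_sums_resonant_part_small_general {α : ℝ} (hα : Irrational α)
    {q : ℕ → ℕ} (hq : ∀ n, (GenContFract.of α).dens n = q (n + 1))
    {σ s : ℝ} (hσ : 1 ≤ σ) (hs : σ + 1 < s) {S : Set ℤ} (hS : 0 ∈ S) {c : ℤ → ℂ} {C : ℝ}
    (hc : ∀ m ∈ S, m ≠ 0 → ‖c m‖ ≤ C * |(m : ℝ)| ^ (-s)) :
    ∃ C' : ℝ, 0 < C' ∧ ∀ t, 1 ≤ t → (q t : ℝ) ^ σ ≤ q (t + 1) → ∀ x : UnitAddCircle,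
      ‖∑ i ∈ Finset.range (q t),
          ∑' m : S, c m * fourier (m : ℤ) (x + ((i * α : ℝ) : UnitAddCircle)) - q t * c 0‖ ≤
        C' * (q t : ℝ) ^ (1 - σ) := by
  have tsum_subtype_eq (x : UnitAddCircle) :
      ∑' m : S, c m * fourier (m : ℤ) x = ∑' m : ℤ, S.indicator c m * fourier m x := by
    rw [tsum_subtype S fun m ↦ c m * fourier m x]
    exact tsum_congr fun m ↦ Set.indicator_mul_left S c fun m ↦ fourier m x
  have indicator_decay (m : ℤ) (hm : m ≠ 0) : ‖S.indicator c m‖ ≤ |C| * |(m : ℝ)| ^ (-s) := by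
    by_cases hmS : m ∈ S
    · rw [Set.indicator_of_mem hmS]
      exact (hc m hmS hm).trans (by gcongr; exact le_abs_self C)
    · rw [Set.indicator_of_notMem hmS, norm_zero]
      positivity
  refine ⟨2 * π * |C| * (∑' m : ℤ, |(m : ℝ)| ^ (-(s - σ))) + 1, by positivity,
    fun t ht hgap x ↦ ?_⟩
  obtain ⟨n, rfl⟩ := Nat.exists_eq_add_of_le' ht
  have not_terminated := not_terminatedAt_of_irrational hα n
  have hQ : 0 < q (n + 1) := by
    exact_mod_cast zero_lt_one.trans_le ((one_le_dens_of not_terminated).trans_eq (hq n))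
  obtain ⟨p, hp, approx⟩ := exists_isCoprime_abs_dens_mul_sub_le not_terminated (hq n)
  have approx_rpow : |q (n + 1) * α - p| ≤ (q (n + 1) : ℝ) ^ (-σ) := by
    refine approx.trans ?_
    rw [hq, rpow_neg (Nat.cast_nonneg _), ← one_div]
    gcongr
  simp only [tsum_subtype_eq]
  rw [← Set.indicator_of_mem hS c]
  refine (norm_sum_tsum_fourier_sub_le hσ hs indicator_decay hQ hp approx_rpow x).trans ?_
  gcongr
  exact le_add_of_nonneg_right zero_le_one

/-- If the resonant set `M` is infinite, the Birkhoff sums of `h₁(x) = ∑_{m∈M∪{0}} ĥ(m)e(mx)`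
at times `q_t`, `t ∈ E`, are almost constant: `max_x |H_{q_t}(x) − q_t ĥ(0)| ≤ C′ q_t^{−(1/τ+2)}`. -/
theorem birkhoff_sums_resonant_part_small
    (α : ℝ) (hirr : Irrational α) (hα : α ∈ Set.Ioo (0 : ℝ) 1)
    -- the partial quotients `a_k` of `α`, via the Gauss map
    (a : ℕ → ℕ) (β : ℕ → ℝ) (hβ1 : β 1 = α)
    (hGauss : ∀ k : ℕ, 1 ≤ k → (a k : ℤ) = ⌊1 / β k⌋ ∧ β (k + 1) = 1 / β k - a k)
    -- the denominators `q_k` of the convergents of `α`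
    (q : ℕ → ℕ) (hq1 : q 1 = 1) (hq2 : q 2 = a 1)
    (hqrec : ∀ k : ℕ, 2 ≤ k → q (k + 1) = a k * q k + q (k - 1))
    (τ τ₁ : ℝ) (hτ : 0 < τ) (hτ₁ : τ₁ = 2 / τ + 6)
    (E : Set ℕ) (hE : E = {k : ℕ | 1 < k ∧ ((q k : ℝ)) ^ (1 / τ + 3) < (q (k + 1) : ℝ)})
    (M : Set ℤ) (hM : M = {m : ℤ | ∃ k ∈ E, ∃ j : ℕ, 1 ≤ j ∧ j ≤ a k ∧
      (m = (j * q k : ℕ) ∨ m = -((j * q k : ℕ) : ℤ))})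
    (hMinf : M.Infinite)
    (hHat : ℤ → ℂ) (C : ℝ) (hC : 0 < C)
    (hdecay : ∀ m : ℤ, m ≠ 0 → ‖hHat m‖ ≤ C * |(m : ℝ)| ^ (-τ₁))
    -- `h₁(x) = ∑_{m ∈ M∪{0}} ĥ(m) e(mx)`
    (h₁ : AddCircle (1 : ℝ) → ℂ)
    (hh₁ : ∀ x, h₁ x = ∑' m : (M ∪ {0} : Set ℤ), hHat m * fourier (m : ℤ) x)
    -- the Birkhoff sums `H_n(x) = ∑_{i=0}^{n-1} h₁(x + iα)`
    (Hsum : ℕ → AddCircle (1 : ℝ) → ℂ)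
    (hHsum : ∀ n x, Hsum n x = ∑ i ∈ Finset.range n, h₁ (x + (((i : ℝ) * α : ℝ) : AddCircle (1 : ℝ)))) :
    ∃ C' : ℝ, 0 < C' ∧ ∀ t ∈ E, ∀ x : AddCircle (1 : ℝ),
      ‖Hsum (q t) x - (q t : ℂ) * hHat 0‖ ≤ C' * (q t : ℝ) ^ (-(1 / τ + 2)) := by
  subst hβ1 hE hτ₁
  have exponent : 1 - (1 / τ + 3) = -(1 / τ + 2) := by ring
  have one_div_τ_pos : 0 < 1 / τ := by positivity
  obtain ⟨C', hC', bound⟩ := birkhoff_sums_resonant_part_small_general hirr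
    (IsGaussOrbit.dens_of_eq hGauss hirr hα hq1 hq2 hqrec) (σ := 1 / τ + 3) (by linarith)
    (by rw [show 2 / τ = 2 * (1 / τ) by ring]; linarith)
    (S := M ∪ {0}) (.inr rfl) (fun m _ ↦ hdecay m)
  exact ⟨C', hC', fun t ht x ↦ by
    simpa only [hHsum, hh₁, exponent] using bound t ht.1.le ht.2.le x⟩
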